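/- Let λ be a real number with λ > 1, let z₀ ∈ ℂ and φ ∈ ℝ. Suppose n : ℕ → ℕ and t : ℕ → ℝ are sequences with t k → +∞ as k → ∞, and suppose w ∈ ℂ with w ≠ 0 is such that (λ ^ (n k))⁻¹ • (z₀ + (t k) • e^{iφ}) converges to w. Then there exists a real number s > 0 with w = s • e^{iφ}. -/

import Mathlib

open Filter

/-!
Rescaling a point of the line `z + t • v` by `t⁻¹` gives `t⁻¹ • z + v`, which tends to `v` as
`t → +∞`, and nonnegative rescalings keep a point on its ray. In a normed space the relation of
lying on a common ray is closed, being the equation `‖x‖ • y = ‖y‖ • x`. Hence any limit of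
nonnegative rescalings of points going to infinity along the line lies on the ray of `v`.
-/

theorem tendsto_inv_smul_add_smul {ι E : Type*} {𝓕 : Filter ι} [AddCommMonoid E] [Module ℝ E]
    [TopologicalSpace E] [ContinuousAdd E] [ContinuousSMul ℝ E]
    {t : ι → ℝ} (ht : Tendsto t 𝓕 atTop) (z v : E) :
    Tendsto (fun k => (t k)⁻¹ • (z + t k • v)) 𝓕 (nhds v) := by
  have hlim : Tendsto (fun k => (t k)⁻¹ • z + v) 𝓕 (nhds v) := by
    simpa only [Pi.inv_apply, zero_smul, zero_add] using
      (ht.inv_tendsto_atTop.smul_const z).add_const v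
  refine hlim.congr' ?_
  filter_upwards [ht.eventually_ne_atTop 0] with k hk
  rw [smul_add, inv_smul_smul₀ hk]

section NormedSpace

variable {ι E : Type*} {𝓕 : Filter ι} [𝓕.NeBot] [NormedAddCommGroup E] [NormedSpace ℝ E]

theorem sameRay_of_tendsto {x y : ι → E} {a b : E} (hx : Tendsto x 𝓕 (nhds a))
    (hy : Tendsto y 𝓕 (nhds b)) (hxy : ∀ᶠ k in 𝓕, SameRay ℝ (x k) (y k)) : SameRay ℝ a b := by
  rw [sameRay_iff_norm_smul_eq]
  exact tendsto_nhds_unique_of_eventuallyEq (hx.norm.smul hy) (hy.norm.smul hx)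
    (hxy.mono fun _ h => h.norm_smul_eq)

theorem sameRay_of_tendsto_smul_add_smul {c t : ι → ℝ} {z v w : E}
    (hc : ∀ᶠ k in 𝓕, 0 ≤ c k) (ht : Tendsto t 𝓕 atTop)
    (hconv : Tendsto (fun k => c k • (z + t k • v)) 𝓕 (nhds w)) : SameRay ℝ w v := by
  refine sameRay_of_tendsto hconv (tendsto_inv_smul_add_smul ht z v) ?_
  filter_upwards [hc, ht.eventually_ge_atTop 0] with k hck htk
  exact ((SameRay.refl _).nonneg_smul_left hck).nonneg_smul_right (inv_nonneg.mpr htk)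

theorem accumulation_point_mem_ray_general {c t : ι → ℝ} {z v w : E}
    (hc : ∀ᶠ k in 𝓕, 0 ≤ c k) (ht : Tendsto t 𝓕 atTop) (hv : v ≠ 0) (hw : w ≠ 0)
    (hconv : Tendsto (fun k => c k • (z + t k • v)) 𝓕 (nhds w)) :
    ∃ s : ℝ, 0 < s ∧ w = s • v :=
  (sameRay_of_tendsto_smul_add_smul hc ht hconv).exists_pos_right hw hv

end NormedSpace

/-- Every nonzero accumulation point of the `λ`-orbit of the line `{z₀ + t·e^{iφ}}`
as `t → +∞` lies on the open ray `{s·e^{iφ} : s > 0}`. -/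
theorem accumulation_point_mem_ray (l : ℝ) (hl : 1 < l) (z₀ : ℂ) (φ : ℝ)
    (n : ℕ → ℕ) (t : ℕ → ℝ) (ht : Tendsto t atTop atTop) (w : ℂ) (hw : w ≠ 0)
    (hconv : Tendsto (fun k => (l ^ (n k))⁻¹ • (z₀ + (t k) • Complex.exp (φ * Complex.I)))
      atTop (nhds w)) :
    ∃ s : ℝ, 0 < s ∧ w = s • Complex.exp (φ * Complex.I) :=
  accumulation_point_mem_ray_general (.of_forall fun _ => by positivity) ht
    (Complex.exp_ne_zero _) hw hconv
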